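/- arXiv:1605.03266 — 3 statements merged into one kernel-verified Lean document; each statement's English description precedes it below -/
import Mathlib

section
/- Let n be a natural number and let s be the outmap of a unique sink orientation (USO) of the n-dimensional hypercube. Then s : Finset (Fin n) → Finset (Fin n) is a bijection. -/
/-- An outmap `s` is the outmap of an orientation of the `n`-cube if for every
vertex `v` and every direction `lam`, the `lam`-edge at `v` is outgoing at `v`
iff it is incoming at the neighbor `v Δ {lam}`. -/
def IsOrientation (n : ℕ) (s : Finset (Fin n) → Finset (Fin n)) : Prop :=
  ∀ (v : Finset (Fin n)) (lam : Fin n), lam ∈ s v ↔ lam ∉ s (symmDiff v {lam})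

/-- An outmap `s` is a unique sink orientation (USO) of the `n`-cube if it is
the outmap of an orientation and every subcube `[u : w]` has a unique sink. -/
def IsUSO (n : ℕ) (s : Finset (Fin n) → Finset (Fin n)) : Prop :=
  IsOrientation n s ∧
    ∀ u w : Finset (Fin n), u ⊆ w →
      ∃! x : Finset (Fin n), u ⊆ x ∧ x ⊆ w ∧ s x ∩ (w \ u) = ∅

/-!
For a face `[u, w]` and a set `R` of its directions, let `N(u, w, R)` be the number of vertices of
the face whose outgoing directions within the face are exactly those in `R`. If `l` is a direction
of the face outside `R`, consider the vertices whose outgoing directions other than `l` are those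
in `R`. Sorting them by whether they contain `l`, or by whether `l` is outgoing, gives
`N(u ∪ {l}, w, R) + N(u, w \ {l}, R) = N(u, w, R ∪ {l}) + N(u, w, R)`.
Unique sinks mean `N(u, w, ∅) = 1` on all faces, and `1 + 1 = N(u, w, R ∪ {l}) + 1` propagates this
to all `R` by induction.
-/

section

variable {α : Type*} [DecidableEq α] {s : Finset α → Finset α} {u w R : Finset α} {l : α}

/-- The unique sink property for a cube with an arbitrary, possibly infinite, set `α` of directions,
whose vertices are the finite subsets of `α`: every finite face `[u, w]` has exactly one sink. -/
def HasUniqueSinks (s : Finset α → Finset α) : Prop :=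
  ∀ u w : Finset α, u ⊆ w → ∃! x : Finset α, u ⊆ x ∧ x ⊆ w ∧ s x ∩ (w \ u) = ∅

/-- The fiber over `R` of the outmap induced by `s` on the face `[u, w]`, whose directions are
`w \ u`. -/
def faceFiber (s : Finset α → Finset α) (u w R : Finset α) : Finset (Finset α) :=
  {x ∈ Finset.Icc u w | s x ∩ (w \ u) = R}

theorem mem_faceFiber {x : Finset α} :
    x ∈ faceFiber s u w R ↔ (u ⊆ x ∧ x ⊆ w) ∧ s x ∩ (w \ u) = R := by
  simp only [faceFiber, Finset.mem_filter, Finset.mem_Icc]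

theorem inter_eq_insert_iff {A D : Finset α} (hlD : l ∈ D) (hlR : l ∉ R) :
    A ∩ D = insert l R ↔ A ∩ D.erase l = R ∧ l ∈ A := by
  constructor
  · intro h
    rw [Finset.inter_erase, h, Finset.erase_insert hlR]
    exact ⟨rfl, Finset.mem_of_mem_inter_left (h ▸ Finset.mem_insert_self l R)⟩
  · rintro ⟨rfl, hlA⟩
    rw [Finset.inter_erase, Finset.insert_erase (Finset.mem_inter.2 ⟨hlA, hlD⟩)]

theorem inter_eq_iff_of_notMem {A D : Finset α} (hlD : l ∈ D) (hlR : l ∉ R) :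
    A ∩ D = R ↔ A ∩ D.erase l = R ∧ l ∉ A := by
  grind

theorem card_faceFiber_facets (hl : l ∈ w \ u) (hlR : l ∉ R) :
    (faceFiber s (insert l u) w R).card + (faceFiber s u (w.erase l) R).card =
      (faceFiber s u w (insert l R)).card + (faceFiber s u w R).card := by
  let T : Finset (Finset α) := {x ∈ Finset.Icc u w | s x ∩ (w \ u).erase l = R}
  have mem_T (x : Finset α) : x ∈ T ↔ (u ⊆ x ∧ x ⊆ w) ∧ s x ∩ (w \ u).erase l = R := by
    simp only [T, Finset.mem_filter, Finset.mem_Icc]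
  have upper_facet : faceFiber s (insert l u) w R = {x ∈ T | l ∈ x} := by
    ext x
    rw [Finset.mem_filter, mem_T, mem_faceFiber, Finset.insert_subset_iff, Finset.sdiff_insert]
    tauto
  have lower_facet : faceFiber s u (w.erase l) R = {x ∈ T | l ∉ x} := by
    ext x
    rw [Finset.mem_filter, mem_T, mem_faceFiber, Finset.subset_erase, Finset.erase_sdiff_comm]
    tauto
  have l_outgoing : faceFiber s u w (insert l R) = {x ∈ T | l ∈ s x} := by
    ext x
    rw [Finset.mem_filter, mem_T, mem_faceFiber, inter_eq_insert_iff hl hlR, ← and_assoc]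
  have l_incoming : faceFiber s u w R = {x ∈ T | l ∉ s x} := by
    ext x
    rw [Finset.mem_filter, mem_T, mem_faceFiber, inter_eq_iff_of_notMem hl hlR, ← and_assoc]
  rw [upper_facet, lower_facet, l_outgoing, l_incoming,
    Finset.card_filter_add_card_filter_not, Finset.card_filter_add_card_filter_not]

namespace HasUniqueSinks

theorem card_faceFiber_empty (hs : HasUniqueSinks s) (huw : u ⊆ w) :
    (faceFiber s u w ∅).card = 1 := by
  rw [Finset.card_eq_one, Finset.singleton_iff_unique_mem]
  simpa only [mem_faceFiber, and_assoc] using hs u w huw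

theorem card_faceFiber (hs : HasUniqueSinks s) (huw : u ⊆ w) (hR : R ⊆ w \ u) :
    (faceFiber s u w R).card = 1 := by
  induction R using Finset.induction_on generalizing u w with
  | empty => exact hs.card_faceFiber_empty huw
  | insert l R hlR ih =>
    obtain ⟨hl, hR⟩ := Finset.insert_subset_iff.1 hR
    obtain ⟨hlw, hlu⟩ := Finset.mem_sdiff.1 hl
    have lower_facet : (faceFiber s u (w.erase l) R).card = 1 :=
      ih (Finset.subset_erase.2 ⟨huw, hlu⟩)
        (Finset.erase_sdiff_comm w u l ▸ Finset.subset_erase.2 ⟨hR, hlR⟩)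
    have upper_facet : (faceFiber s (insert l u) w R).card = 1 :=
      ih (Finset.insert_subset hlw huw)
        (Finset.sdiff_insert w u l ▸ Finset.subset_erase.2 ⟨hR, hlR⟩)
    have face : (faceFiber s u w R).card = 1 := ih huw hR
    have facets := card_faceFiber_facets (s := s) hl hlR
    omega

theorem existsUnique_inter_eq (hs : HasUniqueSinks s) (huw : u ⊆ w) (hR : R ⊆ w \ u) :
    ∃! x, x ∈ Set.Icc u w ∧ s x ∩ (w \ u) = R := by
  have card_eq_one := hs.card_faceFiber huw hR
  rw [Finset.card_eq_one, Finset.singleton_iff_unique_mem] at card_eq_one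
  simpa only [mem_faceFiber, Set.mem_Icc] using card_eq_one

end HasUniqueSinks

theorem uso_outmap_bijective_general (hs : HasUniqueSinks s) (huw : u ⊆ w) :
    Set.BijOn (fun x ↦ s x ∩ (w \ u)) (Set.Icc u w) (Set.Iic (w \ u)) := by
  refine ⟨fun x _ ↦ Finset.inter_subset_right, fun x hx y hy hxy ↦ ?_, fun R hR ↦ ?_⟩
  · exact (hs.existsUnique_inter_eq huw Finset.inter_subset_right).unique ⟨hx, hxy⟩ ⟨hy, rfl⟩
  · exact (hs.existsUnique_inter_eq huw hR).exists

theorem HasUniqueSinks.bijective [Finite α] (hs : HasUniqueSinks s) : Function.Bijective s := by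
  cases nonempty_fintype α
  have bijOn_cube := uso_outmap_bijective_general hs (Finset.empty_subset Finset.univ)
  have vertices : Set.Icc (∅ : Finset α) Finset.univ = Set.univ := Set.Icc_bot_top
  have direction_sets : Set.Iic (Finset.univ : Finset α) = Set.univ := Set.Iic_top
  simpa only [Finset.sdiff_empty, Finset.inter_univ, vertices, direction_sets, Set.bijOn_univ]
    using bijOn_cube

end

/-- The outmap of a USO of a cube is a bijection. -/
theorem uso_outmap_bijective (n : ℕ)
    (s : Finset (Fin n) → Finset (Fin n)) (hs : IsUSO n s) :
    Function.Bijective s :=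
  HasUniqueSinks.bijective hs.2
end

section
/- Let n be a natural number and let s₁ and s₂ be outmaps of unique sink orientations (USOs) of the n-dimensional hypercube. Identify subsets of Fin n with subsets of Fin (n+1) not containing the last element Fin.last n, via the embedding Fin.castSucc. Define the combined outmap s on Finset (Fin (n+1)) by: if Fin.last n ∉ v then s(v) is the image under Fin.castSucc of s₁(v') together with the element Fin.last n, where v' is the preimage of v; if Fin.last n ∈ v then s(v) is the image under Fin.castSucc of s₂(v'), where v' is the preimage of v \ {Fin.last n}. Then s is the outmap of a unique sink orientation of the (n+1)-dimensional hypercube (this is the combination φ₁ ↓ φ₂ in which the lower (n+1)-facet carries s₁, the upper (n+1)-facet carries s₂, and all edges in direction n+1 are directed from the lower facet to the upper facet). -/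
/-- The combined outmap φ₁ ↓ φ₂: the lower (n+1)-facet carries s₁, the upper
(n+1)-facet carries s₂, and all edges in direction n+1 point from the lower
facet to the upper facet (they are outgoing at vertices not containing Fin.last n). -/
noncomputable def combineDown (n : ℕ) (s₁ s₂ : Finset (Fin n) → Finset (Fin n)) :
    Finset (Fin (n + 1)) → Finset (Fin (n + 1)) := fun v =>
  if Fin.last n ∈ v then
    (s₂ ((v \ {Fin.last n}).preimage Fin.castSucc
        (Fin.castSucc_injective n).injOn)).image Fin.castSucc
  else
    (s₁ (v.preimage Fin.castSucc (Fin.castSucc_injective n).injOn)).image Fin.castSucc ∪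
      {Fin.last n}

/-!
Every edge in the new direction points to the upper facet, so a sink of a subcube that meets the
upper facet must lie there. Hence the sinks of `[u : w]` under the combined outmap are the
sinks of its projection to the `n`-cube, under `s₂` if `[u : w]` meets the upper facet and under
`s₁` otherwise, placed back in the facet that contains the top vertex `w`.
-/

/-- `x` is a sink of the subcube `[u : w]` under the outmap `s`: it lies in the subcube, and no edge
of the subcube leaves it. -/
def IsSubcubeSink {α : Type*} [DecidableEq α] (s : Finset α → Finset α) (u w x : Finset α) :
    Prop :=
  u ⊆ x ∧ x ⊆ w ∧ s x ∩ (w \ u) = ∅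

theorem isUSO_iff_existsUnique_isSubcubeSink {n : ℕ} {s : Finset (Fin n) → Finset (Fin n)} :
    IsUSO n s ↔ IsOrientation n s ∧ ∀ u w, u ⊆ w → ∃! x, IsSubcubeSink s u w x :=
  Iff.rfl

section FacetProj

variable {n : ℕ}

/-- The projection of the `(n + 1)`-cube to the `n`-cube along the last direction. It identifies
each of the two facets orthogonal to that direction with the `n`-cube. -/
noncomputable def facetProj (v : Finset (Fin (n + 1))) : Finset (Fin n) :=
  v.preimage Fin.castSucc (Fin.castSucc_injective n).injOn

theorem mem_facetProj {v : Finset (Fin (n + 1))} {i : Fin n} :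
    i ∈ facetProj v ↔ i.castSucc ∈ v :=
  Finset.mem_preimage

theorem facetProj_inter (v w : Finset (Fin (n + 1))) :
    facetProj (v ∩ w) = facetProj v ∩ facetProj w := by
  ext i
  simp only [mem_facetProj, Finset.mem_inter]

theorem facetProj_union (v w : Finset (Fin (n + 1))) :
    facetProj (v ∪ w) = facetProj v ∪ facetProj w := by
  ext i
  simp only [mem_facetProj, Finset.mem_union]

theorem facetProj_sdiff (v w : Finset (Fin (n + 1))) :
    facetProj (v \ w) = facetProj v \ facetProj w := by
  ext i
  simp only [mem_facetProj, Finset.mem_sdiff]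

theorem facetProj_symmDiff (v w : Finset (Fin (n + 1))) :
    facetProj (symmDiff v w) = symmDiff (facetProj v) (facetProj w) := by
  ext i
  simp only [mem_facetProj, Finset.mem_symmDiff]

theorem facetProj_singleton_last : facetProj {Fin.last n} = ∅ := by
  ext i
  simp [mem_facetProj]

theorem facetProj_singleton_castSucc (i : Fin n) : facetProj {i.castSucc} = {i} := by
  ext j
  simp [mem_facetProj]

theorem facetProj_image_castSucc (y : Finset (Fin n)) : facetProj (y.image Fin.castSucc) = y := by
  ext i
  simp [mem_facetProj]

theorem subset_iff_last_mem_and_facetProj {v w : Finset (Fin (n + 1))} :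
    v ⊆ w ↔ (Fin.last n ∈ v → Fin.last n ∈ w) ∧ facetProj v ⊆ facetProj w := by
  simp only [Finset.subset_iff, Fin.forall_fin_succ', mem_facetProj, and_comm]

theorem eq_iff_last_mem_and_facetProj {v w : Finset (Fin (n + 1))} :
    v = w ↔ (Fin.last n ∈ v ↔ Fin.last n ∈ w) ∧ facetProj v = facetProj w := by
  simp only [Finset.ext_iff, Fin.forall_fin_succ', mem_facetProj, and_comm]

theorem eq_empty_iff_last_mem_and_facetProj {v : Finset (Fin (n + 1))} :
    v = ∅ ↔ Fin.last n ∉ v ∧ facetProj v = ∅ := by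
  simp only [Finset.eq_empty_iff_forall_notMem, Fin.forall_fin_succ', mem_facetProj, and_comm]

theorem isSubcubeSink_iff_last_mem_and_facetProj
    {s : Finset (Fin (n + 1)) → Finset (Fin (n + 1))} {u w x : Finset (Fin (n + 1))} :
    IsSubcubeSink s u w x ↔
      ((Fin.last n ∈ u → Fin.last n ∈ x) ∧ (Fin.last n ∈ x → Fin.last n ∈ w) ∧
        ¬(Fin.last n ∈ s x ∧ Fin.last n ∈ w ∧ Fin.last n ∉ u)) ∧
      (facetProj u ⊆ facetProj x ∧ facetProj x ⊆ facetProj w ∧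
        facetProj (s x) ∩ (facetProj w \ facetProj u) = ∅) := by
  simp only [IsSubcubeSink, subset_iff_last_mem_and_facetProj,
    eq_empty_iff_last_mem_and_facetProj, facetProj_inter, facetProj_sdiff, Finset.mem_inter,
    Finset.mem_sdiff]
  tauto

theorem exists_last_mem_iff_and_facetProj_eq (p : Prop) (y : Finset (Fin n)) :
    ∃ x : Finset (Fin (n + 1)), (Fin.last n ∈ x ↔ p) ∧ facetProj x = y := by
  by_cases hp : p
  · refine ⟨y.image Fin.castSucc ∪ {Fin.last n}, by simp [hp], ?_⟩
    rw [facetProj_union, facetProj_image_castSucc, facetProj_singleton_last, Finset.union_empty]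
  · exact ⟨y.image Fin.castSucc, by simp [hp], facetProj_image_castSucc y⟩

theorem existsUnique_last_mem_iff_and_facetProj (p : Prop) {P : Finset (Fin n) → Prop}
    (hP : ∃! y, P y) :
    ∃! x : Finset (Fin (n + 1)), (Fin.last n ∈ x ↔ p) ∧ P (facetProj x) := by
  obtain ⟨y, hy, y_unique⟩ := hP
  obtain ⟨x, hxp, rfl⟩ := exists_last_mem_iff_and_facetProj_eq p y
  refine ⟨x, ⟨hxp, hy⟩, fun z ⟨hzp, hz⟩ => ?_⟩
  exact eq_iff_last_mem_and_facetProj.2 ⟨hzp.trans hxp.symm, y_unique _ hz⟩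

end FacetProj

section CombineDown

variable {n : ℕ} {s₁ s₂ : Finset (Fin n) → Finset (Fin n)}

theorem last_mem_combineDown {v : Finset (Fin (n + 1))} :
    Fin.last n ∈ combineDown n s₁ s₂ v ↔ Fin.last n ∉ v := by
  unfold combineDown
  split_ifs with hv <;> simp [hv]

theorem combineDown_eq_ite_facetProj (v : Finset (Fin (n + 1))) :
    combineDown n s₁ s₂ v =
      if Fin.last n ∈ v then (s₂ (facetProj (v \ {Fin.last n}))).image Fin.castSucc
      else (s₁ (facetProj v)).image Fin.castSucc ∪ {Fin.last n} :=
  rfl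

theorem facetProj_combineDown (v : Finset (Fin (n + 1))) :
    facetProj (combineDown n s₁ s₂ v) = (if Fin.last n ∈ v then s₂ else s₁) (facetProj v) := by
  rw [combineDown_eq_ite_facetProj]
  split_ifs
  · rw [facetProj_image_castSucc, facetProj_sdiff, facetProj_singleton_last, Finset.sdiff_empty]
  · rw [facetProj_union, facetProj_image_castSucc, facetProj_singleton_last, Finset.union_empty]

theorem castSucc_mem_combineDown {v : Finset (Fin (n + 1))} {i : Fin n} :
    i.castSucc ∈ combineDown n s₁ s₂ v ↔
      i ∈ (if Fin.last n ∈ v then s₂ else s₁) (facetProj v) := by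
  rw [← mem_facetProj, facetProj_combineDown]

theorem combineDown_isOrientation (h₁ : IsOrientation n s₁) (h₂ : IsOrientation n s₂) :
    IsOrientation (n + 1) (combineDown n s₁ s₂) := by
  intro v lam
  induction lam using Fin.lastCases with
  | last => simp [last_mem_combineDown, Finset.mem_symmDiff]
  | cast i =>
    have same_facet : Fin.last n ∈ symmDiff v {i.castSucc} ↔ Fin.last n ∈ v := by
      simp [Finset.mem_symmDiff, (Fin.castSucc_ne_last i).symm]
    simp only [castSucc_mem_combineDown, same_facet, facetProj_symmDiff,
      facetProj_singleton_castSucc]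
    split_ifs
    · exact h₂ (facetProj v) i
    · exact h₁ (facetProj v) i

theorem isSubcubeSink_combineDown_iff {u w x : Finset (Fin (n + 1))} (huw : u ⊆ w) :
    IsSubcubeSink (combineDown n s₁ s₂) u w x ↔
      (Fin.last n ∈ x ↔ Fin.last n ∈ w) ∧
        IsSubcubeSink (if Fin.last n ∈ w then s₂ else s₁)
          (facetProj u) (facetProj w) (facetProj x) := by
  have last_direction :
      ((Fin.last n ∈ u → Fin.last n ∈ x) ∧ (Fin.last n ∈ x → Fin.last n ∈ w) ∧
        ¬(Fin.last n ∉ x ∧ Fin.last n ∈ w ∧ Fin.last n ∉ u)) ↔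
      (Fin.last n ∈ x ↔ Fin.last n ∈ w) := by
    have last_mem_of_mem := @huw (Fin.last n)
    tauto
  rw [isSubcubeSink_iff_last_mem_and_facetProj, last_mem_combineDown, last_direction,
    facetProj_combineDown]
  refine and_congr_right fun same_facet => ?_
  simp only [IsSubcubeSink, same_facet]

end CombineDown

/-- Combining two USOs of the n-cube as the two (n+1)-facets of an (n+1)-cube,
with all edges in the new direction oriented from the lower facet to the upper
facet, yields a USO of the (n+1)-cube. -/
theorem combineDown_isUSO (n : ℕ)
    (s₁ s₂ : Finset (Fin n) → Finset (Fin n))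
    (h₁ : IsUSO n s₁) (h₂ : IsUSO n s₂) :
    IsUSO (n + 1) (combineDown n s₁ s₂) := by
  refine isUSO_iff_existsUnique_isSubcubeSink.2
    ⟨combineDown_isOrientation h₁.1 h₂.1, fun u w huw => ?_⟩
  have facet_isUSO : IsUSO n (if Fin.last n ∈ w then s₂ else s₁) := by
    split_ifs
    · exact h₂
    · exact h₁
  have proj_subset : facetProj u ⊆ facetProj w := (subset_iff_last_mem_and_facetProj.1 huw).2
  simp only [isSubcubeSink_combineDown_iff huw]
  exact existsUnique_last_mem_iff_and_facetProj _
    ((isUSO_iff_existsUnique_isSubcubeSink.1 facet_isUSO).2 _ _ proj_subset)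
end

section
/- For an outmap s, let P(s) denote the least l ≥ 1 such that s^[l](∅) = ∅ (when such an l exists). For the recursively defined outmaps s_n, the period satisfies P(s_{n+1}) = 2 · P(s_n) for every n ≥ 1. -/
/-- The recursion step from dimension n to dimension n+1: on the lower facet
(vertices not containing Fin.last n) use the outmap s together with the
outgoing new direction Fin.last n; on the upper facet (vertices containing
Fin.last n) all edges point downward, so the outmap is v \ {Fin.last n}. -/
noncomputable def stepOutmap (n : ℕ) (s : Finset (Fin n) → Finset (Fin n)) :
    Finset (Fin (n + 1)) → Finset (Fin (n + 1)) := fun v =>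
  if Fin.last n ∈ v then v \ {Fin.last n}
  else
    (s (v.preimage Fin.castSucc (Fin.castSucc_injective n).injOn)).image Fin.castSucc ∪
      {Fin.last n}

/-- The recursively defined family of outmaps s_n: for n = 1 the single edge
points from ∅ to {0}; s_{n+1} is obtained from s_n by the recursion step.
(The value at n = 0 is irrelevant.) -/
noncomputable def recOutmap : (n : ℕ) → Finset (Fin n) → Finset (Fin n)
  | 0 => fun _ => ∅
  | 1 => fun v => if (0 : Fin 1) ∈ v then ∅ else {0}
  | (n + 2) => stepOutmap (n + 1) (recOutmap (n + 1))

/-- The period of an outmap s: the least l ≥ 1 with s^[l](∅) = ∅. -/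
noncomputable def outmapPeriod (n : ℕ) (s : Finset (Fin n) → Finset (Fin n)) : ℕ :=
  sInf {l : ℕ | 1 ≤ l ∧ s^[l] ∅ = ∅}

/-!
The outmap `stepOutmap n s` swaps the two facets: it sends a vertex `v` of the lower facet to the
copy of `s v` in the upper facet, which then drops back to `s v` in the lower facet. Hence `s` is
the first return map of `stepOutmap n s` to the lower facet, with constant return time `2`.
-/

open Function

section Dynamics

variable {α β : Type*} {f : α → α} {g : β → β} {φ : α → β} {p : ℕ}

theorem sInf_iterate_eq_self_eq_minimalPeriod (f : α → α) (x : α) :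
    sInf {l : ℕ | 1 ≤ l ∧ f^[l] x = x} = minimalPeriod f x := by
  by_cases hx : x ∈ periodicPts f
  · have hmem : minimalPeriod f x ∈ {l : ℕ | 1 ≤ l ∧ f^[l] x = x} :=
      ⟨minimalPeriod_pos_of_mem_periodicPts hx, iterate_minimalPeriod⟩
    have hlower : minimalPeriod f x ∈ lowerBounds {l : ℕ | 1 ≤ l ∧ f^[l] x = x} :=
      fun _ ⟨hl, hfl⟩ => IsPeriodicPt.minimalPeriod_le hl hfl
    exact IsLeast.csInf_eq ⟨hmem, hlower⟩
  · have hempty : {l : ℕ | 1 ≤ l ∧ f^[l] x = x} = ∅ :=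
      Set.eq_empty_of_forall_notMem fun l hl => hx ⟨l, hl⟩
    rw [hempty, Nat.sInf_empty, minimalPeriod_eq_zero_of_notMem_periodicPts hx]

theorem minimalPeriod_apply_of_semiconj (hφ : Injective φ) (hfg : Semiconj φ f g) (x : α) :
    minimalPeriod g (φ x) = minimalPeriod f x :=
  minimalPeriod_eq_minimalPeriod_iff.2 fun n =>
    ⟨fun h => hφ (((hfg.iterate_right n) x).trans h), fun h => h.map hfg⟩

theorem iterate_apply_of_semiconj_iterate (hfg : Semiconj φ f g^[p]) (n : ℕ) (x : α) :
    g^[n] (φ x) = g^[n % p] (φ (f^[n / p] x)) := by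
  rw [(hfg.iterate_right (n / p)) x, ← iterate_mul, ← iterate_add_apply, Nat.mod_add_div]

theorem dvd_of_isPeriodicPt_of_semiconj_iterate (hp : 0 < p) (hfg : Semiconj φ f g^[p])
    (hreturn : ∀ a i, 0 < i → i < p → g^[i] (φ a) ∉ Set.range φ) {n : ℕ} {x : α}
    (hn : IsPeriodicPt g n (φ x)) : p ∣ n := by
  by_contra hpn
  refine hreturn (f^[n / p] x) (n % p) (Nat.emod_pos_of_not_dvd hpn) (Nat.mod_lt n hp) ⟨x, ?_⟩
  rw [← iterate_apply_of_semiconj_iterate hfg, hn.eq]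

theorem minimalPeriod_apply_of_semiconj_iterate (hp : 0 < p) (hφ : Injective φ)
    (hfg : Semiconj φ f g^[p])
    (hreturn : ∀ a i, 0 < i → i < p → g^[i] (φ a) ∉ Set.range φ) (x : α) :
    minimalPeriod g (φ x) = p * minimalPeriod f x := by
  have hdvd : p ∣ minimalPeriod g (φ x) :=
    dvd_of_isPeriodicPt_of_semiconj_iterate hp hfg hreturn (isPeriodicPt_minimalPeriod g (φ x))
  rw [← minimalPeriod_apply_of_semiconj hφ hfg, minimalPeriod_iterate_eq_div_gcd hp.ne',
    Nat.gcd_eq_right hdvd, Nat.mul_div_cancel' hdvd]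

end Dynamics

theorem outmapPeriod_eq_minimalPeriod (n : ℕ) (s : Finset (Fin n) → Finset (Fin n)) :
    outmapPeriod n s = minimalPeriod s ∅ :=
  sInf_iterate_eq_self_eq_minimalPeriod s ∅

section StepOutmap

variable {n : ℕ} (s : Finset (Fin n) → Finset (Fin n)) (v : Finset (Fin n))

theorem last_notMem_image_castSucc : Fin.last n ∉ v.image Fin.castSucc := by
  simp [Fin.castSucc_ne_last]

theorem stepOutmap_image_castSucc :
    stepOutmap n s (v.image Fin.castSucc) = (s v).image Fin.castSucc ∪ {Fin.last n} := by
  have hpreimage : (v.image Fin.castSucc).preimage Fin.castSucc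
      (Fin.castSucc_injective n).injOn = v := by
    ext; simp
  rw [stepOutmap, if_neg (last_notMem_image_castSucc v), hpreimage]

theorem stepOutmap_image_castSucc_union_last :
    stepOutmap n s (v.image Fin.castSucc ∪ {Fin.last n}) = v.image Fin.castSucc := by
  rw [stepOutmap, if_pos (by simp), Finset.union_sdiff_cancel_right
    (Finset.disjoint_singleton_right.2 (last_notMem_image_castSucc v))]

theorem semiconj_image_castSucc_stepOutmap_iterate_two :
    Semiconj (Finset.image Fin.castSucc) s (stepOutmap n s)^[2] := fun v => by
  rw [iterate_succ_apply, iterate_one, stepOutmap_image_castSucc,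
    stepOutmap_image_castSucc_union_last]

theorem stepOutmap_image_castSucc_notMem_range :
    stepOutmap n s (v.image Fin.castSucc) ∉ Set.range (Finset.image Fin.castSucc) := by
  rintro ⟨w, hw⟩
  apply last_notMem_image_castSucc w
  rw [hw, stepOutmap_image_castSucc]
  simp

theorem outmapPeriod_stepOutmap :
    outmapPeriod (n + 1) (stepOutmap n s) = 2 * outmapPeriod n s := by
  have hreturn : ∀ (v : Finset (Fin n)) (i : ℕ), 0 < i → i < 2 →
      (stepOutmap n s)^[i] (v.image Fin.castSucc) ∉ Set.range (Finset.image Fin.castSucc) := by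
    intro v i hi_pos hi_lt
    obtain rfl : i = 1 := by omega
    exact stepOutmap_image_castSucc_notMem_range s v
  rw [outmapPeriod_eq_minimalPeriod, outmapPeriod_eq_minimalPeriod,
    ← Finset.image_empty (Fin.castSucc : Fin n → Fin (n + 1))]
  exact minimalPeriod_apply_of_semiconj_iterate two_pos
    (Finset.image_injective (Fin.castSucc_injective n))
    (semiconj_image_castSucc_stepOutmap_iterate_two s) hreturn ∅

end StepOutmap

/-- The period of the recursively defined outmaps doubles with every dimension:
P(s_{n+1}) = 2 P(s_n) for all n ≥ 1. -/
theorem recOutmap_period_doubles (n : ℕ) (hn : 1 ≤ n) :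
    outmapPeriod (n + 1) (recOutmap (n + 1)) = 2 * outmapPeriod n (recOutmap n) := by
  obtain ⟨m, rfl⟩ := Nat.exists_eq_add_of_le' hn
  exact outmapPeriod_stepOutmap (recOutmap (m + 1))
end
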